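/- For every integer n ≥ 2 and every edge e of the n-dimensional varietal hypercube VQ_n, and every integer ℓ with 4 ≤ ℓ ≤ 2^n and ℓ ≠ 5, there is a cycle of length ℓ in VQ_n containing the edge e. In particular, VQ_n is 6-edge-pancyclic for n ≥ 3. -/

import Mathlib

/-- The relation `I = {(00,00),(01,01),(10,11),(11,10)}` on pairs of bits,
where a pair `(a, b)` records two consecutive bits (higher bit first). -/
def vqCross (p q : Bool × Bool) : Prop :=
  (p = (false, false) ∧ q = (false, false)) ∨
  (p = (false, true) ∧ q = (false, true)) ∨
  (p = (true, false) ∧ q = (true, true)) ∨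
  (p = (true, true) ∧ q = (true, false))

/-- Adjacency in the varietal hypercube `VQ n`.  A vertex is a function
`Fin n → Bool`, the bit `x_k` (1-indexed, `x = x_n x_{n-1} ⋯ x_1`) being
the value at index `k - 1`; the leading bit `x_n` is at index `n - 1`. -/
def vqAdj : (n : ℕ) → (Fin n → Bool) → (Fin n → Bool) → Prop
  | 0, _, _ => False
  | 1, x, y => x ≠ y
  | (n + 2), x, y =>
    if x (Fin.last (n + 1)) = y (Fin.last (n + 1)) then
      -- both in the same copy of `VQ (n+1)`
      vqAdj (n + 1) (fun i => x i.castSucc) (fun i => y i.castSucc)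
    else
      if 3 ∣ (n + 2) then
        (∀ i : Fin (n + 2), i.val < n - 1 → x i = y i) ∧
        vqCross (x ⟨n, by omega⟩, x ⟨n - 1, by omega⟩)
          (y ⟨n, by omega⟩, y ⟨n - 1, by omega⟩)
      else
        ∀ i : Fin (n + 1), x i.castSucc = y i.castSucc

/-- The `n`-dimensional varietal hypercube `VQ_n`. -/
def varietalCube (n : ℕ) : SimpleGraph (Fin n → Bool) :=
  SimpleGraph.fromRel (vqAdj n)

/-- There is a path of length `m` from `u` to `v` in `G`. -/
def HasPathOfLength {V : Type*} (G : SimpleGraph V) (u v : V) (m : ℕ) : Prop :=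
  ∃ p : G.Walk u v, p.IsPath ∧ p.length = m

/-- Adjacent vertices of `G` are joined by paths of all lengths `m` with `3 ≤ m < M`, `m ≠ 4`. -/
def EdgePathsUpTo {V : Type*} (G : SimpleGraph V) (M : ℕ) : Prop :=
  ∀ u v, G.Adj u v → ∀ m, 3 ≤ m → m < M → m ≠ 4 → HasPathOfLength G u v m

section Paths

variable {V W : Type*} {G : SimpleGraph V} {H : SimpleGraph W}

lemma SimpleGraph.Adj.hasPathOfLength_one {u v : V} (h : G.Adj u v) :
    HasPathOfLength G u v 1 :=
  ⟨h.toWalk, by simp [SimpleGraph.Adj.toWalk, h.ne], by simp [SimpleGraph.Adj.toWalk]⟩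

lemma EdgePathsUpTo.hasPathOfLength {M : ℕ} (hG : EdgePathsUpTo G M) {u v : V}
    (h : G.Adj u v) {m : ℕ} (h0 : m ≠ 0) (h2 : m ≠ 2) (h4 : m ≠ 4) (hM : m < M) :
    HasPathOfLength G u v m := by
  obtain rfl | h1 := eq_or_ne m 1
  · exact h.hasPathOfLength_one
  · exact hG u v h m (by omega) hM h4

lemma HasPathOfLength.map {u v : V} {m : ℕ} (h : HasPathOfLength G u v m) (f : G →g H)
    (hf : Function.Injective f) : HasPathOfLength H (f u) (f v) m := by
  obtain ⟨p, hp, rfl⟩ := h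
  exact ⟨p.map f, hp.map hf, by simp⟩

lemma SimpleGraph.Walk.IsPath.append_cons {u v w z : V} {p : G.Walk u v} {q : G.Walk w z}
    (hp : p.IsPath) (hq : q.IsPath) (h : G.Adj v w)
    (hd : ∀ x ∈ p.support, x ∉ q.support) : (p.append (.cons h q)).IsPath := by
  rw [SimpleGraph.Walk.isPath_def, SimpleGraph.Walk.support_append]
  simp only [SimpleGraph.Walk.support_cons, List.tail_cons]
  exact List.Nodup.append hp.support_nodup hq.support_nodup hd

/-- An edge together with a path of length at least two joining its ends is a cycle. -/
lemma HasPathOfLength.exists_isCycle {u v : V} (h : G.Adj u v) {m : ℕ} (hm : 2 ≤ m)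
    (hp : HasPathOfLength G u v m) :
    ∃ (w : V) (C : G.Walk w w), C.IsCycle ∧ C.length = m + 1 ∧ s(u, v) ∈ C.edges := by
  obtain ⟨p, hp, rfl⟩ := hp
  refine ⟨v, .cons h.symm p, ?_, by simp, by simp [Sym2.eq_swap]⟩
  rw [SimpleGraph.Walk.cons_isCycle_iff]
  refine ⟨hp, fun he => ?_⟩
  cases p with
  | nil => simp at hm
  | cons h' q =>
    rw [SimpleGraph.Walk.cons_isPath_iff] at hp
    rw [SimpleGraph.Walk.edges_cons, List.mem_cons] at he
    rcases he with he | he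
    · rcases Sym2.eq_iff.1 he with ⟨h1, _⟩ | ⟨rfl, _⟩
      · exact absurd h1 h.ne'
      obtain rfl := SimpleGraph.Walk.isPath_iff_nil.1 hp.1 |>.eq_nil
      simp at hm
    · exact hp.2 (q.snd_mem_support_of_mem_edges he)

end Paths

section Doubling

variable {V W : Type*} {G : SimpleGraph V} {H : SimpleGraph W}

/-- Replacing the first edge `ab` of a path in the first copy by a detour through the second
copy. -/
lemma exists_detour (f g : G →g H) (hf : Function.Injective f) (hg : Function.Injective g)
    (hfg : ∀ x y, f x ≠ g y) (σ : V → V) (hσ : ∀ x, H.Adj (f x) (g (σ x)))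
    {a b v : V} (h : G.Adj a b) (t : G.Walk b v) (ht : (SimpleGraph.Walk.cons h t).IsPath)
    {k : ℕ} (hk : HasPathOfLength G (σ a) (σ b) k) :
    ∃ P : H.Walk (f a) (f v), P.IsPath ∧ P.length = t.length + k + 2 ∧
      ∀ x, f x ∈ P.support → x ∈ (SimpleGraph.Walk.cons h t).support := by
  obtain ⟨q, hq, rfl⟩ := hk
  rw [SimpleGraph.Walk.cons_isPath_iff] at ht
  have hQ : ((q.map g).append (.cons (hσ b).symm (t.map f))).IsPath := by
    refine SimpleGraph.Walk.IsPath.append_cons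
      (hq.map hg)
      (ht.1.map hf) _ ?_
    intro x hx hx'
    simp only [SimpleGraph.Walk.support_map, List.mem_map] at hx hx'
    obtain ⟨y, -, rfl⟩ := hx
    obtain ⟨z, -, hz⟩ := hx'
    exact hfg _ _ hz
  have hs : ∀ x, f x ∈ ((q.map g).append (.cons (hσ b).symm (t.map f))).support →
      x ∈ t.support := by
    intro x hx
    rw [SimpleGraph.Walk.support_append] at hx
    simp only [SimpleGraph.Walk.support_cons, List.tail_cons, List.mem_append,
      SimpleGraph.Walk.support_map, List.mem_map] at hx
    rcases hx with ⟨y, -, hy⟩ | ⟨y, hy, hyx⟩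
    · exact absurd hy.symm (hfg _ _)
    · rwa [← hf hyx]
  refine ⟨.cons (hσ a) _, (SimpleGraph.Walk.cons_isPath_iff _ _).2 ⟨hQ, fun hx => ht.2 (hs a hx)⟩,
    by simp; omega, fun x hx => ?_⟩
  rw [SimpleGraph.Walk.support_cons, List.mem_cons] at hx ⊢
  exact hx.imp (fun e => hf e) (hs x)

lemma hasPathOfLength_of_adj_copy (f g : G →g H) (hf : Function.Injective f)
    (hg : Function.Injective g) (hfg : ∀ x y, f x ≠ g y) (σ τ : V → V)
    (hσ : ∀ x, H.Adj (f x) (g (σ x))) (hτ : ∀ x y, G.Adj x y → G.Adj (σ x) (σ y) ∨ y = τ x)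
    {M : ℕ} (hM : 8 ≤ M) (hG : EdgePathsUpTo G M) {u v : V} (h : G.Adj u v)
    {m : ℕ} (h3 : 3 ≤ m) (hm : m < 2 * M) (h4 : m ≠ 4) : HasPathOfLength H (f u) (f v) m := by
  by_cases hmM : m < M
  · exact (hG u v h m h3 hmM h4).map f hf
  obtain ⟨j, k, hj3, hj4, hjM, hk0, hk2, hk4, hkM, hjk⟩ : ∃ j k, 3 ≤ j ∧ j ≠ 4 ∧ j < M ∧
      k ≠ 0 ∧ k ≠ 2 ∧ k ≠ 4 ∧ k < M ∧ m = j + 1 + k := by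
    by_cases hk : m - M = 0 ∨ m - M = 2 ∨ m - M = 4
    · exact ⟨M - 2, m - M + 1, by omega⟩
    · exact ⟨M - 1, m - M, by omega⟩
  obtain ⟨p, hp, hpl⟩ := hG u v h j hj3 hjM hj4
  cases p with
  | nil => simp at hpl; omega
  | @cons _ y _ h1 p =>
    by_cases hs : G.Adj (σ u) (σ y)
    · obtain ⟨P, hP, hl, -⟩ := exists_detour f g hf hg hfg σ hσ h1 p hp
        (hG.hasPathOfLength hs hk0 hk2 hk4 hkM)
      simp only [SimpleGraph.Walk.length_cons] at hpl
      exact ⟨P, hP, by omega⟩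
    · cases p with
      | nil => simp at hpl; omega
      | @cons _ z _ h2 p =>
        have hs' : G.Adj (σ y) (σ z) := by
          rcases hτ _ _ h2 with h' | h'
          · exact h'
          rcases hτ _ _ h1.symm with h'' | h''
          · exact absurd h''.symm hs
          · rw [SimpleGraph.Walk.cons_isPath_iff] at hp
            exact absurd (by simp [h''.trans h'.symm]) hp.2
        rw [SimpleGraph.Walk.cons_isPath_iff] at hp
        obtain ⟨P, hP, hl, hsup⟩ := exists_detour f g hf hg hfg σ hσ h2 p hp.1
          (hG.hasPathOfLength hs' hk0 hk2 hk4 hkM)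
        simp only [SimpleGraph.Walk.length_cons] at hpl
        exact ⟨.cons (f.map_adj h1) P,
          (SimpleGraph.Walk.cons_isPath_iff _ _).2 ⟨hP, fun hx => hp.2 (hsup _ hx)⟩,
          by simp; omega⟩

/-- Joining a path in the first copy to a path in the second copy by a matching edge. -/
lemma HasPathOfLength.join (f g : G →g H) (hf : Function.Injective f)
    (hg : Function.Injective g) (hfg : ∀ x y, f x ≠ g y) {u v w z : V}
    {a b : ℕ} (ha : HasPathOfLength G u v a) (hb : HasPathOfLength G w z b)
    (h : H.Adj (f v) (g w)) : HasPathOfLength H (f u) (g z) (a + 1 + b) := by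
  obtain ⟨p, hp, rfl⟩ := ha
  obtain ⟨q, hq, rfl⟩ := hb
  refine ⟨(p.map f).append (.cons h (q.map g)), SimpleGraph.Walk.IsPath.append_cons
      (hp.map hf)
      (hq.map hg) _ ?_, by simp; omega⟩
  intro x hx hx'
  simp only [SimpleGraph.Walk.support_map, List.mem_map] at hx hx'
  obtain ⟨y, -, rfl⟩ := hx
  obtain ⟨z, -, hz⟩ := hx'
  exact hfg _ _ hz.symm

/-- Each vertex `v` starts a path `v a w` of `G` whose first edge is preserved by `σ` and for which
`σ w` and `σ v` are joined by a path of length `3`. -/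
def HasPreservedPentagons (G : SimpleGraph V) (σ : V → V) : Prop :=
  ∀ v, ∃ a w b c, (G.Adj v a ∧ G.Adj (σ v) (σ a)) ∧ G.Adj a w ∧ v ≠ w ∧
    G.Adj (σ w) (σ b) ∧ G.Adj (σ b) (σ c) ∧ G.Adj (σ c) (σ v) ∧
    σ w ≠ σ c ∧ σ w ≠ σ v ∧ σ b ≠ σ v

lemma hasPathOfLength_of_matching_edge (f g : G →g H) (hf : Function.Injective f)
    (hg : Function.Injective g) (hfg : ∀ x y, f x ≠ g y) (σ : V → V)
    (hσ : ∀ x, H.Adj (f x) (g (σ x))) (h5 : HasPreservedPentagons G σ)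
    {M : ℕ} (hM : 8 ≤ M) (hG : EdgePathsUpTo G M) (v : V)
    {m : ℕ} (h3 : 3 ≤ m) (hm : m < 2 * M) (h4 : m ≠ 4) :
    HasPathOfLength H (f v) (g (σ v)) m := by
  obtain ⟨a, w, b, c, ⟨hva, hsva⟩, haw, hvw, h1, h2, h3', n1, n2, n3⟩ := h5 v
  obtain rfl | h6 := eq_or_ne m 6
  · have p : HasPathOfLength G v w 2 :=
      ⟨.cons hva (.cons haw .nil), by simp [hva.ne, haw.ne, hvw], rfl⟩
    have q : HasPathOfLength G (σ w) (σ v) 3 :=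
      ⟨.cons h1 (.cons h2 (.cons h3' .nil)), by simp [h1.ne, h2.ne, h3'.ne, n1, n2, n3], rfl⟩
    exact p.join f g hf hg hfg q (hσ w)
  obtain ⟨j, k, hj0, hj2, hj4, hjM, hk0, hk2, hk4, hkM, rfl⟩ : ∃ j k, j ≠ 0 ∧ j ≠ 2 ∧ j ≠ 4 ∧
      j < M ∧ k ≠ 0 ∧ k ≠ 2 ∧ k ≠ 4 ∧ k < M ∧ m = j + 1 + k := by
    by_cases hmM : m ≤ M + 1
    · exact ⟨m - 2, 1, by omega⟩
    · by_cases hk : m - M = 2 ∨ m - M = 4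
      · exact ⟨M - 2, m - M + 1, by omega⟩
      · exact ⟨M - 1, m - M, by omega⟩
  exact (hG.hasPathOfLength hva hj0 hj2 hj4 hjM).join f g hf hg hfg
    (hG.hasPathOfLength hsva.symm hk0 hk2 hk4 hkM) (hσ a)

/-- If `H` consists of two copies of `G` joined by the matching `x ↦ σ x`, edge path lengths
double. -/
lemma EdgePathsUpTo.double (f g : G →g H) (hf : Function.Injective f)
    (hg : Function.Injective g) (hfg : ∀ x y, f x ≠ g y) (σ τ : V → V)
    (hσ : ∀ x, H.Adj (f x) (g (σ x))) (hσ' : ∀ x, H.Adj (g x) (f (σ x)))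
    (hτ : ∀ x y, G.Adj x y → G.Adj (σ x) (σ y) ∨ y = τ x)
    (h5 : HasPreservedPentagons G σ)
    (hH : ∀ u v, H.Adj u v → (∃ x y, G.Adj x y ∧ u = f x ∧ v = f y) ∨
      (∃ x y, G.Adj x y ∧ u = g x ∧ v = g y) ∨ (∃ x, u = f x ∧ v = g (σ x)) ∨
      (∃ x, u = g x ∧ v = f (σ x)))
    {M : ℕ} (hM : 8 ≤ M) (hG : EdgePathsUpTo G M) : EdgePathsUpTo H (2 * M) := by
  intro u v huv m h3 hm h4
  have hgf : ∀ x y, g x ≠ f y := fun x y h => hfg y x h.symm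
  rcases hH u v huv with ⟨x, y, h, rfl, rfl⟩ | ⟨x, y, h, rfl, rfl⟩ | ⟨x, rfl, rfl⟩ | ⟨x, rfl, rfl⟩
  · exact hasPathOfLength_of_adj_copy f g hf hg hfg σ τ hσ hτ hM hG h h3 hm h4
  · exact hasPathOfLength_of_adj_copy g f hg hf hgf σ τ hσ' hτ hM hG h h3 hm h4
  · exact hasPathOfLength_of_matching_edge f g hf hg hfg σ hσ h5 hM hG x h3 hm h4
  · exact hasPathOfLength_of_matching_edge g f hg hf hgf σ hσ' h5 hM hG x h3 hm h4

end Doubling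

section Search

/-- Depth-first search for a path of length `m` from `u` to `v` avoiding the vertices in `vis`. -/
def pathSearch {α : Type*} [DecidableEq α] (adj : α → α → Bool) (all : List α) :
    ℕ → α → α → List α → Bool
  | 0, u, v, _ => decide (u = v)
  | m + 1, u, v, vis => all.any fun w =>
      adj u w && (!decide (w ∈ vis) && pathSearch adj all m w v (w :: vis))

lemma exists_path_of_pathSearch {α V : Type*} [DecidableEq α] {G : SimpleGraph V}
    {adj : α → α → Bool} {f : α → V} (hf : Function.Injective f)
    (hadj : ∀ a b, adj a b = true → G.Adj (f a) (f b)) (all : List α) (m : ℕ) (u v : α)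
    (vis : List α) (hu : u ∈ vis) (h : pathSearch adj all m u v vis = true) :
    ∃ p : G.Walk (f u) (f v), p.IsPath ∧ p.length = m ∧
      ∀ x, f x ∈ p.support → x = u ∨ x ∉ vis := by
  induction m generalizing u vis with
  | zero =>
    simp only [pathSearch, decide_eq_true_eq] at h
    subst h
    exact ⟨.nil, by simp, rfl, fun x hx => .inl (hf (by simpa using hx))⟩
  | succ m ih =>
    simp only [pathSearch, List.any_eq_true, Bool.and_eq_true, Bool.not_eq_true',
      decide_eq_false_iff_not] at h
    obtain ⟨w, -, huw, hw, hs⟩ := h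
    obtain ⟨p, hp, hl, hsup⟩ := ih w (w :: vis) (by simp) hs
    refine ⟨.cons (hadj _ _ huw) p, (SimpleGraph.Walk.cons_isPath_iff _ _).2 ⟨hp, fun hx => ?_⟩,
      by simp [hl], fun x hx => ?_⟩
    · rcases hsup u hx with rfl | h'
      · exact hw hu
      · exact h' (by simp [hu])
    · rw [SimpleGraph.Walk.support_cons, List.mem_cons] at hx
      rcases hx with hx | hx
      · exact .inl (hf hx)
      · rcases hsup x hx with rfl | h'
        · exact .inr hw
        · exact .inr fun hx => h' (by simp [hx])

lemma edgePathsUpTo_of_pathSearch {α V : Type*} [DecidableEq α] {G : SimpleGraph V}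
    {adj : α → α → Bool} {f : α → V} (hf : Function.Bijective f)
    (hadj : ∀ a b, G.Adj (f a) (f b) ↔ adj a b = true) (all : List α) (M : ℕ)
    (h : ∀ a b, adj a b = true → ∀ m < M, 3 ≤ m → m ≠ 4 →
      pathSearch adj all m a b [a] = true) : EdgePathsUpTo G M := by
  intro u v huv m h3 hm h4
  obtain ⟨a, rfl⟩ := hf.2 u
  obtain ⟨b, rfl⟩ := hf.2 v
  obtain ⟨p, hp, hl, -⟩ := exists_path_of_pathSearch hf.1 (fun a b => (hadj a b).2) all m a b [a]
    (by simp) (h a b ((hadj a b).1 huv) m hm h3 h4)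
  exact ⟨p, hp, hl⟩

end Search

section VarietalCube

/-- The matching joining the two copies of `VQ_n` in `VQ_{n+1}`. -/
def vqMatch (n : ℕ) (x : Fin n → Bool) : Fin n → Bool := fun i =>
  if h : 3 ∣ n + 1 ∧ i.val + 2 = n then xor (x i) (x ⟨i.val + 1, by omega⟩) else x i

/-- The vertex of `VQ_{n+1}` with leading bit `b` and remaining bits `x`. -/
abbrev vqSnoc {n : ℕ} (x : Fin n → Bool) (b : Bool) : Fin (n + 1) → Bool :=
  Fin.snoc (α := fun _ => Bool) x b

lemma vqMatch_of_not_dvd {n : ℕ} (h : ¬ 3 ∣ n + 1) (x : Fin n → Bool) : vqMatch n x = x := by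
  funext i
  simp [vqMatch, h]

lemma vqMatch_involutive (n : ℕ) : Function.Involutive (vqMatch n) := by
  intro x
  funext i
  unfold vqMatch
  by_cases h : 3 ∣ n + 1 ∧ i.val + 2 = n
  · have h' : ¬ (i.val + 1 + 2 = n) := by omega
    simp [h, h']
  · simp only [h, dite_false]

lemma vqAdj_succ (n : ℕ) (x y : Fin (n + 2) → Bool) :
    vqAdj (n + 2) x y ↔
      if x (Fin.last (n + 1)) = y (Fin.last (n + 1)) then vqAdj (n + 1) (Fin.init x) (Fin.init y)
      else Fin.init y = vqMatch (n + 1) (Fin.init x) := by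
  rw [vqAdj]
  split_ifs with h1 h2
  · rfl
  · constructor
    · rintro ⟨hlow, hc⟩
      funext i
      simp only [Fin.init, vqMatch]
      by_cases hi : i.val < n - 1
      · have h' : ¬ (i.val + 2 = n + 1) := by omega
        simp [h', hlow i.castSucc hi]
      · obtain hi | hi : i.val = n ∨ i.val = n - 1 := by omega
        · have e : i.castSucc = ⟨n, by omega⟩ := Fin.ext hi
          have h' : ¬ (i.val + 2 = n + 1) := by omega
          simp only [h', and_false, dite_false, e]
          revert hc
          simp only [vqCross, Prod.mk.injEq]
          rintro (h | h | h | h) <;> simp [h]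
        · have e : i.castSucc = ⟨n - 1, by omega⟩ := Fin.ext hi
          have h' : i.val + 2 = n + 1 := by omega
          have e' : (⟨i.val + 1, by omega⟩ : Fin (n + 2)) = ⟨n, by omega⟩ :=
            Fin.ext (by simp; omega)
          simp only [h', h2, and_self, dite_true, e, Fin.castSucc_mk, e']
          revert hc
          simp only [vqCross, Prod.mk.injEq]
          rintro (h | h | h | h) <;> simp [h]
    · intro h
      refine ⟨fun i hi => ?_, ?_⟩
      · have := congrFun h ⟨i.val, by omega⟩
        have h' : ¬ (i.val + 2 = n + 1) := by omega
        simpa [Fin.init, vqMatch, h'] using this.symm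
      · have ha := congrFun h ⟨n, by omega⟩
        have hb := congrFun h ⟨n - 1, by omega⟩
        have hn : n - 1 + 2 = n + 1 := by omega
        have hn' : n - 1 + 1 = n := by omega
        simp only [Fin.init, vqMatch, Fin.castSucc_mk, hn, hn', h2, and_self, dite_true] at ha hb
        simp only [show ¬ (n + 2 = n + 1) by omega, and_false, dite_false] at ha
        rw [ha, hb]
        generalize x ⟨n, _⟩ = c
        generalize x ⟨n - 1, _⟩ = d
        revert c d
        unfold vqCross
        decide
  · rw [vqMatch_of_not_dvd h2, funext_iff]
    exact forall_congr' fun i => eq_comm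

lemma vqAdj_symm (n : ℕ) (x y : Fin n → Bool) (h : vqAdj n x y) : vqAdj n y x := by
  induction n with
  | zero => exact h
  | succ n ih =>
    cases n with
    | zero => exact Ne.symm h
    | succ n =>
      rw [vqAdj_succ] at h ⊢
      by_cases hxy : x (Fin.last (n + 1)) = y (Fin.last (n + 1))
      · rw [if_pos hxy] at h
        rw [if_pos hxy.symm]
        exact ih _ _ h
      · rw [if_neg hxy] at h
        rw [if_neg (Ne.symm hxy), h, vqMatch_involutive]

lemma not_vqAdj_self (n : ℕ) (x : Fin n → Bool) : ¬ vqAdj n x x := by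
  induction n with
  | zero => exact id
  | succ n ih =>
    cases n with
    | zero => exact fun h => h rfl
    | succ n =>
      rw [vqAdj_succ, if_pos rfl]
      exact ih _

lemma varietalCube_adj {n : ℕ} {x y : Fin n → Bool} :
    (varietalCube n).Adj x y ↔ vqAdj n x y := by
  rw [varietalCube, SimpleGraph.fromRel_adj]
  constructor
  · rintro ⟨-, h | h⟩
    · exact h
    · exact vqAdj_symm _ _ _ h
  · intro h
    refine ⟨?_, .inl h⟩
    rintro rfl
    exact not_vqAdj_self _ _ h

lemma varietalCube_adj_snoc {n : ℕ} (hn : n ≠ 0) (x y : Fin n → Bool) (b c : Bool) :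
    (varietalCube (n + 1)).Adj (vqSnoc x b) (vqSnoc y c) ↔
      if b = c then (varietalCube n).Adj x y else y = vqMatch n x := by
  obtain ⟨n, rfl⟩ := Nat.exists_eq_succ_of_ne_zero hn
  simp only [varietalCube_adj]
  rw [vqAdj_succ]
  simp [vqSnoc]

lemma exists_eq_vqSnoc {n : ℕ} (x : Fin (n + 1) → Bool) : ∃ y b, x = vqSnoc y b :=
  ⟨Fin.init x, x (Fin.last n), (Fin.snoc_init_self x).symm⟩

lemma vqSnoc_injective {n : ℕ} (b : Bool) : Function.Injective fun x : Fin n → Bool => vqSnoc x b :=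
  fun x y h => by simpa [vqSnoc] using congrArg (Fin.init (α := fun _ => Bool)) h

lemma vqMatch_snoc_snoc {k : ℕ} (h : 3 ∣ k + 3) (x : Fin k → Bool) (a b : Bool) :
    vqMatch (k + 2) (vqSnoc (vqSnoc x b) a) = vqSnoc (vqSnoc x (xor b a)) a := by
  funext i
  have h' : 3 ∣ k + 2 + 1 := h
  simp only [vqMatch, h', true_and]
  refine Fin.lastCases ?_ (fun i => ?_) i
  · simp [vqSnoc]
  · refine Fin.lastCases ?_ (fun i => ?_) i
    · have : (⟨k + 1, by omega⟩ : Fin (k + 2)) = Fin.last (k + 1) := rfl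
      simp [vqSnoc, this]
    · have : i.val ≠ k := by omega
      simp [vqSnoc, this]

/-- At each vertex the matching fails to preserve at most one edge. -/
lemma exists_vqMatch_adj_or_eq {n : ℕ} (hn : 3 ≤ n) :
    ∃ τ : (Fin n → Bool) → (Fin n → Bool), ∀ x y, (varietalCube n).Adj x y →
      (varietalCube n).Adj (vqMatch n x) (vqMatch n y) ∨ y = τ x := by
  by_cases h : 3 ∣ n + 1
  · obtain ⟨k, rfl⟩ : ∃ k, n = k + 2 := ⟨n - 2, by omega⟩
    refine ⟨fun x => vqSnoc (Fin.init x) (!x (Fin.last (k + 1))), fun x y hxy => ?_⟩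
    obtain ⟨x, a, rfl⟩ := exists_eq_vqSnoc x
    obtain ⟨x, b, rfl⟩ := exists_eq_vqSnoc x
    obtain ⟨y, c, rfl⟩ := exists_eq_vqSnoc y
    obtain ⟨y, d, rfl⟩ := exists_eq_vqSnoc y
    have h1 : ¬ 3 ∣ k + 1 := by omega
    have h2 : ¬ 3 ∣ k + 1 + 1 := by omega
    rw [vqMatch_snoc_snoc h, vqMatch_snoc_snoc h]
    by_cases hac : a = c
    · subst hac
      left
      have hk : k ≠ 0 := by omega
      simpa [varietalCube_adj_snoc, hk, vqMatch_of_not_dvd h1] using hxy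
    · right
      rw [varietalCube_adj_snoc (by omega), if_neg hac, vqMatch_of_not_dvd h2] at hxy
      rw [hxy]
      have : c = !a := by revert hac; revert a c; decide
      simp [vqSnoc, this]
  · refine ⟨id, fun x y hxy => .inl ?_⟩
    rwa [vqMatch_of_not_dvd h, vqMatch_of_not_dvd h]

/-- Adjacency in `VQ_3`, on triples of bits `(x_1, x_2, x_3)`. -/
def vqThree (p q : Bool × Bool × Bool) : Bool :=
  if p.2.2 = q.2.2 then xor (xor p.1 q.1) (xor p.2.1 q.2.1)
  else p.2.1 == q.2.1 && q.1 == xor p.1 p.2.1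

/-- Overwriting the three lowest bits of `x` by `p`. -/
def vqSetLow {n : ℕ} (x : Fin n → Bool) (p : Bool × Bool × Bool) : Fin n → Bool := fun i =>
  if i.val = 0 then p.1 else if i.val = 1 then p.2.1 else if i.val = 2 then p.2.2 else x i

lemma vqSetLow_snoc {n : ℕ} (hn : 3 ≤ n) (x : Fin n → Bool) (b : Bool) (p : Bool × Bool × Bool) :
    vqSetLow (vqSnoc x b) p = vqSnoc (vqSetLow x p) b := by
  funext i
  refine Fin.lastCases ?_ (fun i => ?_) i
  · simp [vqSetLow, vqSnoc, show n ≠ 0 by omega, show n ≠ 1 by omega, show n ≠ 2 by omega]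
  · simp [vqSetLow, vqSnoc]

lemma vqMatch_setLow {n : ℕ} (hn : 3 ≤ n) (x : Fin n → Bool) (p : Bool × Bool × Bool) :
    vqMatch n (vqSetLow x p) = vqSetLow (vqMatch n x) p := by
  funext i
  by_cases h : 3 ∣ n + 1 ∧ i.val + 2 = n
  · have : ¬ i.val = 0 ∧ ¬ i.val = 1 ∧ ¬ i.val = 2 := by omega
    simp [vqMatch, vqSetLow, h, this]
  · simp only [vqMatch, vqSetLow, h, dite_false]

lemma vqSetLow_self {n : ℕ} (hn : 3 ≤ n) (x : Fin n → Bool) :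
    vqSetLow x (x ⟨0, by omega⟩, x ⟨1, by omega⟩, x ⟨2, by omega⟩) = x := by
  funext i
  unfold vqSetLow
  split_ifs with h0 h1 h2
  · exact congrArg x (Fin.ext h0.symm)
  · exact congrArg x (Fin.ext h1.symm)
  · exact congrArg x (Fin.ext h2.symm)
  · rfl

lemma vqSetLow_injective {n : ℕ} (hn : 3 ≤ n) (x : Fin n → Bool) :
    Function.Injective (vqSetLow x) := by
  rintro ⟨a, b, c⟩ ⟨a', b', c'⟩ h
  have h0 := congrFun h ⟨0, by omega⟩
  have h1 := congrFun h ⟨1, by omega⟩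
  have h2 := congrFun h ⟨2, by omega⟩
  simp [vqSetLow] at h0 h1 h2
  simp [h0, h1, h2]

lemma varietalCube_two_adj (a b a' b' : Bool) :
    (varietalCube 2).Adj (vqSnoc (fun _ => a) b) (vqSnoc (fun _ => a') b') ↔
      xor (xor a a') (xor b b') = true := by
  rw [varietalCube_adj_snoc one_ne_zero, vqMatch_of_not_dvd (by decide), varietalCube_adj]
  simp only [vqAdj, ne_eq, funext_iff, Fin.forall_fin_one]
  revert a b a' b'
  decide

lemma varietalCube_three_adj (x : Fin 3 → Bool) (p q : Bool × Bool × Bool) :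
    (varietalCube 3).Adj (vqSetLow x p) (vqSetLow x q) ↔ vqThree p q = true := by
  have key : ∀ p : Bool × Bool × Bool,
      vqSetLow x p = vqSnoc (vqSnoc (fun _ : Fin 1 => p.1) p.2.1) p.2.2 := by
    intro p
    funext i
    fin_cases i <;> rfl
  have hm : vqMatch 2 (vqSnoc (fun _ : Fin 1 => p.1) p.2.1) =
      vqSnoc (fun _ : Fin 1 => xor p.1 p.2.1) p.2.1 := by
    funext i
    fin_cases i <;> rfl
  have hs : ∀ a b a' b' : Bool, vqSnoc (fun _ : Fin 1 => a) b = vqSnoc (fun _ : Fin 1 => a') b' ↔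
      a = a' ∧ b = b' := by
    intro a b a' b'
    refine ⟨fun h => ⟨congrFun h 0, congrFun h 1⟩, ?_⟩
    rintro ⟨rfl, rfl⟩
    rfl
  rw [key, key, varietalCube_adj_snoc two_ne_zero, varietalCube_two_adj, hm, hs, vqThree]
  split_ifs
  · rfl
  · rw [Bool.and_eq_true, beq_iff_eq, beq_iff_eq, and_comm, eq_comm (a := p.2.1)]

lemma varietalCube_adj_setLow {n : ℕ} (hn : 3 ≤ n) (x : Fin n → Bool) {p q : Bool × Bool × Bool}
    (h : vqThree p q = true) : (varietalCube n).Adj (vqSetLow x p) (vqSetLow x q) := by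
  induction n, hn using Nat.le_induction with
  | base => exact (varietalCube_three_adj x p q).2 h
  | succ n hn ih =>
    obtain ⟨x, b, rfl⟩ := exists_eq_vqSnoc x
    rw [vqSetLow_snoc hn, vqSetLow_snoc hn, varietalCube_adj_snoc (by omega), if_pos rfl]
    exact ih x

set_option synthInstance.maxSize 1000 in
lemma exists_vqThree_pentagon (p : Bool × Bool × Bool) : ∃ a, vqThree p a = true ∧
    ∃ w, vqThree a w = true ∧ p ≠ w ∧ ∃ b, vqThree w b = true ∧ b ≠ p ∧
      ∃ c, vqThree b c = true ∧ vqThree c p = true ∧ w ≠ c := by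
  revert p
  decide +kernel

lemma hasPreservedPentagons_vqMatch {n : ℕ} (hn : 3 ≤ n) :
    HasPreservedPentagons (varietalCube n) (vqMatch n) := by
  intro v
  obtain ⟨p, hp⟩ : ∃ p, v = vqSetLow v p := ⟨_, (vqSetLow_self hn v).symm⟩
  obtain ⟨a, hpa, w, haw, hpw, b, hwb, hbp, c, hbc, hcp, hwc⟩ := exists_vqThree_pentagon p
  have hinj := vqSetLow_injective hn v
  have hinj' := vqSetLow_injective hn (vqMatch n v)
  have hv : vqMatch n v = vqSetLow (vqMatch n v) p := by
    conv_lhs => rw [hp, vqMatch_setLow hn]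
  refine ⟨vqSetLow v a, vqSetLow v w, vqSetLow v b, vqSetLow v c, ?_⟩
  simp only [vqMatch_setLow hn]
  have hA := fun {q r} => varietalCube_adj_setLow hn v (p := q) (q := r)
  have hB := fun {q r} => varietalCube_adj_setLow hn (vqMatch n v) (p := q) (q := r)
  refine ⟨⟨?_, ?_⟩, hA haw, ?_, hB hwb, hB hbc, ?_, hinj'.ne hwc, ?_, ?_⟩
  · simpa only [← hp] using hA hpa
  · simpa only [← hv] using hB hpa
  · simpa only [← hp] using hinj.ne hpw
  · simpa only [← hv] using hB hcp
  · simpa only [← hv] using hinj'.ne hpw.symm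
  · simpa only [← hv] using hinj'.ne hbp

lemma edgePathsUpTo_varietalCube_two : EdgePathsUpTo (varietalCube 2) 4 := by
  refine edgePathsUpTo_of_pathSearch (α := Bool × Bool)
    (adj := fun p q => xor (xor p.1 q.1) (xor p.2 q.2))
    (f := fun p => vqSnoc (fun _ => p.1) p.2) ⟨?_, ?_⟩
    (fun p q => varietalCube_two_adj _ _ _ _)
    [(false, false), (false, true), (true, false), (true, true)] 4 ?_
  · intro p q h
    exact Prod.ext (congrFun h 0) (congrFun h 1)
  · intro x
    refine ⟨(x 0, x 1), ?_⟩
    funext i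
    fin_cases i <;> rfl
  · decide +kernel

lemma edgePathsUpTo_varietalCube_three : EdgePathsUpTo (varietalCube 3) 8 := by
  refine edgePathsUpTo_of_pathSearch (α := Bool × Bool × Bool) (adj := vqThree)
    (f := vqSetLow fun _ => false) ⟨vqSetLow_injective le_rfl _, ?_⟩ (varietalCube_three_adj _)
    [(false, false, false), (true, false, false), (false, true, false), (true, true, false),
      (false, false, true), (true, false, true), (false, true, true), (true, true, true)] 8 ?_
  · intro x
    refine ⟨(x 0, x 1, x 2), ?_⟩
    funext i
    fin_cases i <;> rfl
  · decide +kernel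

/-- The copy of `VQ_n` in `VQ_{n+1}` with leading bit `b`. -/
def vqCopy {n : ℕ} (hn : n ≠ 0) (b : Bool) : varietalCube n →g varietalCube (n + 1) where
  toFun x := vqSnoc x b
  map_rel' h := (varietalCube_adj_snoc hn _ _ _ _).2 (by rwa [if_pos rfl])

lemma edgePathsUpTo_varietalCube {n : ℕ} (hn : 2 ≤ n) : EdgePathsUpTo (varietalCube n) (2 ^ n) := by
  obtain rfl | h3 : n = 2 ∨ 3 ≤ n := by omega
  · exact edgePathsUpTo_varietalCube_two
  clear hn
  induction n, h3 using Nat.le_induction with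
  | base => exact edgePathsUpTo_varietalCube_three
  | succ n hn ih =>
    have hn0 : n ≠ 0 := by omega
    have h8 : 8 ≤ 2 ^ n := by simpa using Nat.pow_le_pow_right (n := 2) (by norm_num) hn
    obtain ⟨τ, hτ⟩ := exists_vqMatch_adj_or_eq hn
    have hcross : ∀ b x, (varietalCube (n + 1)).Adj (vqCopy hn0 b x)
        (vqCopy hn0 (!b) (vqMatch n x)) := fun b x =>
      (varietalCube_adj_snoc hn0 _ _ _ _).2 (by simp)
    rw [pow_succ']
    refine EdgePathsUpTo.double (vqCopy hn0 false) (vqCopy hn0 true) (vqSnoc_injective _)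
      (vqSnoc_injective _) (fun x y h => ?_) (vqMatch n) τ (hcross false) (hcross true) hτ
      (hasPreservedPentagons_vqMatch hn) (fun u v huv => ?_) h8 ih
    · simpa [vqCopy, vqSnoc] using congrFun h (Fin.last n)
    · obtain ⟨x, a, rfl⟩ := exists_eq_vqSnoc u
      obtain ⟨y, b, rfl⟩ := exists_eq_vqSnoc v
      rw [varietalCube_adj_snoc hn0] at huv
      cases a <;> cases b
      · exact .inl ⟨x, y, by simpa using huv, rfl, rfl⟩
      · rw [if_neg (by simp)] at huv
        exact .inr (.inr (.inl ⟨x, rfl, by rw [huv]; rfl⟩))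
      · rw [if_neg (by simp)] at huv
        exact .inr (.inr (.inr ⟨x, rfl, by rw [huv]; rfl⟩))
      · exact .inr (.inl ⟨x, y, by simpa using huv, rfl, rfl⟩)

end VarietalCube

/-- Every edge of `VQ_n` (`n ≥ 2`) lies on cycles of every length from `4` to `2^n`
except `5`; in particular, `VQ_n` is `6`-edge-pancyclic for `n ≥ 3`. -/
theorem stmt0 (n : ℕ) (hn : 2 ≤ n) :
    (∀ e ∈ (varietalCube n).edgeSet, ∀ ℓ : ℕ, 4 ≤ ℓ → ℓ ≤ 2 ^ n → ℓ ≠ 5 →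
      ∃ (v : Fin n → Bool) (C : (varietalCube n).Walk v v),
        C.IsCycle ∧ C.length = ℓ ∧ e ∈ C.edges) ∧
    (3 ≤ n → ∀ e ∈ (varietalCube n).edgeSet, ∀ ℓ : ℕ, 6 ≤ ℓ → ℓ ≤ 2 ^ n →
      ∃ (v : Fin n → Bool) (C : (varietalCube n).Walk v v),
        C.IsCycle ∧ C.length = ℓ ∧ e ∈ C.edges) := by
  have key : ∀ e ∈ (varietalCube n).edgeSet, ∀ ℓ : ℕ, 4 ≤ ℓ → ℓ ≤ 2 ^ n → ℓ ≠ 5 →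
      ∃ (v : Fin n → Bool) (C : (varietalCube n).Walk v v),
        C.IsCycle ∧ C.length = ℓ ∧ e ∈ C.edges := by
    intro e he ℓ h4 hℓ h5
    induction e using Sym2.ind with
    | _ u v =>
      have huv : (varietalCube n).Adj u v := he
      obtain ⟨m, rfl⟩ : ∃ m, ℓ = m + 1 := ⟨ℓ - 1, by omega⟩
      exact (edgePathsUpTo_varietalCube hn u v huv m (by omega) (by omega)
        (by omega)).exists_isCycle huv (by omega)
  exact ⟨key, fun _ e he ℓ h6 hℓ => key e he ℓ (by omega) hℓ (by omega)⟩
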